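/- There exists a universal constant k > 0 with the following property. Let ν be a probability measure on 𝕋, U₂(x) := ∫ d(x,y)² ν(dy), and μ_β the Gibbs measure with density exp(−βU₂)/Z_β with respect to λ. For every s > 0 and β ≥ 1 with βs ≤ 1/2, every y ∈ 𝕋 and every f ∈ C¹(𝕋), setting η := s/(1−s), g_y(z) := f(z)·⟨y−z⟩ and, for x ∈ B(y,(1−s)π), x_η := x + η·⟨x−y⟩, one has ∫_{B(y,(1−s)π)} [ (1−s)^{−1} exp(β(U₂(x) − U₂(x_η))) g_y(x_η) − g_y(x) ]² μ_β(dx) ≤ k s² β² ( ∫_𝕋 (f')² dμ_β + ∫_𝕋 f² dμ_β ). -/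

import Mathlib

open MeasureTheory Real Set Filter

noncomputable section

instance : Fact (0 < 2 * π) := ⟨Real.two_pi_pos⟩

/-- The circle `𝕋 = ℝ/(2πℤ)`. -/
abbrev 𝕋 : Type := AddCircle (2 * π)

/-- The normalized Haar probability measure `λ` on the circle. -/
def lam : Measure 𝕋 := (ENNReal.ofReal (2 * π))⁻¹ • volume

/-- The representative of a point of the circle in `(-π, π]`. -/
def rep (z : 𝕋) : ℝ := ((AddCircle.equivIoc (2 * π) (-π) z : Set.Ioc (-π) (-π + 2 * π)) : ℝ)

/-- The potential `U₂(x) = ∫ d(x,y)² ν(dy)`. -/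
def U2 (ν : Measure 𝕋) (x : 𝕋) : ℝ := ∫ y, dist x y ^ 2 ∂ν

/-- The normalizing constant `Z_β = ∫ exp(-β U₂) dλ`. -/
def Z2 (ν : Measure 𝕋) (β : ℝ) : ℝ := ∫ x, Real.exp (-β * U2 ν x) ∂lam

/-- The Gibbs measure `μ_β` with density `exp(-β U₂)/Z_β` w.r.t. `λ`. -/
def gibbs2 (ν : Measure 𝕋) (β : ℝ) : Measure 𝕋 :=
  lam.withDensity fun x => ENNReal.ofReal (Real.exp (-β * U2 ν x) / Z2 ν β)

/-!
Write `F` and `V` for `f` and `β U₂` in the coordinate `t = ⟨x - y⟩`. With `η = s / (1 - s)` and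
`a = 1 + η = (1 - s)⁻¹`, the point `x_η` has coordinate `a t`, so `T*_{y,s}` becomes a weighted
dilation on an interval. For `u = V t - V (a t)`,
`a eᵘ (F (a t) (-a t)) - F t (-t) = -t ((F (a t) - F t) + (a² eᵘ - 1) F (a t))`.
The increment `F (a t) - F t = ∫ σ in 1..a, t F' (σ t)` is of order `η` and is handled by
Cauchy–Schwarz and Fubini. The factor `a² eᵘ - 1` is of order `(1 + β) η`, because the potential is
Lipschitz; for the same reason the weights `exp (-V t)` and `exp (-V (σ t))`, `1 ≤ σ ≤ a`, are
comparable.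
-/

section Dilation

theorem sq_intervalIntegral_le {g : ℝ → ℝ} (hg : Continuous g) {a b : ℝ} (hab : a ≤ b) :
    (∫ t in a..b, g t) ^ 2 ≤ (b - a) * ∫ t in a..b, g t ^ 2 := by
  rcases hab.eq_or_lt with rfl | hlt
  · simp
  have hne : b - a ≠ 0 := (sub_pos.2 hlt).ne'
  have hint : ∀ {h : ℝ → ℝ}, Continuous h → IntegrableOn h (Ioc a b) := fun hh ↦
    (hh.intervalIntegrable a b).1
  have jensen : (⨍ t in a..b, g t) ^ 2 ≤ ⨍ t in a..b, g t ^ 2 := by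
    rw [uIoc_of_le hab]
    exact (even_two.convexOn_pow (𝕜 := ℝ)).map_set_average_le (by fun_prop) isClosed_univ
      (by simp [hlt]) (by simp) (by simp) (hint hg) (hint (by fun_prop))
  rw [interval_average_eq, interval_average_eq, smul_eq_mul, smul_eq_mul, mul_pow] at jensen
  calc (∫ t in a..b, g t) ^ 2
      = (b - a) ^ 2 * ((b - a)⁻¹ ^ 2 * (∫ t in a..b, g t) ^ 2) := by
        rw [← mul_assoc, ← mul_pow, mul_inv_cancel₀ hne, one_pow, one_mul]
    _ ≤ (b - a) ^ 2 * ((b - a)⁻¹ * ∫ t in a..b, g t ^ 2) := by gcongr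
    _ = (b - a) * ∫ t in a..b, g t ^ 2 := by
        rw [sq, ← mul_assoc, mul_inv_cancel_right₀ hne]

theorem sq_comp_mul_sub_le {F : ℝ → ℝ} (hF : ContDiff ℝ 1 F) {a : ℝ} (ha : 1 ≤ a) (t : ℝ) :
    (F (a * t) - F t) ^ 2 ≤ (a - 1) * t ^ 2 * ∫ σ in (1 : ℝ)..a, deriv F (σ * t) ^ 2 := by
  have hderiv : ∀ σ, HasDerivAt (fun σ ↦ F (σ * t)) (deriv F (σ * t) * t) σ := fun σ ↦
    (hF.differentiable one_ne_zero _).hasDerivAt.comp σ (hasDerivAt_mul_const t)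
  have ftc : ∫ σ in (1 : ℝ)..a, deriv F (σ * t) * t = F (a * t) - F t := by
    rw [intervalIntegral.integral_eq_sub_of_hasDerivAt (fun σ _ ↦ hderiv σ)
      (Continuous.intervalIntegrable (by fun_prop) _ _), one_mul]
  calc (F (a * t) - F t) ^ 2 ≤ (a - 1) * ∫ σ in (1 : ℝ)..a, (deriv F (σ * t) * t) ^ 2 :=
        ftc ▸ sq_intervalIntegral_le (by fun_prop) ha
    _ = (a - 1) * t ^ 2 * ∫ σ in (1 : ℝ)..a, deriv F (σ * t) ^ 2 := by
        simp_rw [mul_pow, intervalIntegral.integral_mul_const]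
        ring

variable {H : ℝ → ℝ} {r : ℝ}

theorem integral_comp_mul_le (hH : Continuous H) (hH₀ : ∀ t, 0 ≤ H t) {σ R : ℝ} (hσ : 1 ≤ σ)
    (hr : 0 ≤ r) (hR : σ * r ≤ R) :
    ∫ t in (-r)..r, H (σ * t) ≤ ∫ t in (-R)..R, H t := by
  have hσr : 0 ≤ σ * r := by positivity
  have hnonneg : 0 ≤ ∫ t in (-(σ * r))..(σ * r), H t :=
    intervalIntegral.integral_nonneg (by linarith) fun t _ ↦ hH₀ t
  rw [intervalIntegral.integral_comp_mul_left _ (by positivity), mul_neg, smul_eq_mul]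
  calc σ⁻¹ * ∫ t in (-(σ * r))..(σ * r), H t ≤ ∫ t in (-(σ * r))..(σ * r), H t :=
        mul_le_of_le_one_left hnonneg (inv_le_one_of_one_le₀ hσ)
    _ ≤ ∫ t in (-R)..R, H t :=
        intervalIntegral.integral_mono_interval (by linarith) (by linarith) hR
          (Eventually.of_forall hH₀) (hH.intervalIntegrable _ _)

theorem integral_integral_comp_mul_le (hH : Continuous H) (hH₀ : ∀ t, 0 ≤ H t) {a : ℝ}
    (ha : 1 ≤ a) (hr : 0 ≤ r) :
    ∫ t in (-r)..r, ∫ σ in (1 : ℝ)..a, H (σ * t) ≤ (a - 1) * ∫ t in (-(a * r))..(a * r), H t := by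
  have hswap : ∫ t in (-r)..r, ∫ σ in (1 : ℝ)..a, H (σ * t)
      = ∫ σ in (1 : ℝ)..a, ∫ t in (-r)..r, H (σ * t) := by
    have hcont : Continuous (Function.uncurry fun t σ : ℝ ↦ H (σ * t)) := by
      simp only [Function.uncurry_def]
      fun_prop
    exact intervalIntegral_intervalIntegral_swap <|
      (hcont.continuousOn.integrableOn_compact (isCompact_uIcc.prod isCompact_uIcc)).mono_set
        (prod_mono uIoc_subset_uIcc uIoc_subset_uIcc)
  have hcont : Continuous fun σ ↦ ∫ t in (-r)..r, H (σ * t) :=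
    intervalIntegral.continuous_parametric_intervalIntegral_of_continuous'
      (by simp only [Function.uncurry_def]; fun_prop) _ _
  calc ∫ t in (-r)..r, ∫ σ in (1 : ℝ)..a, H (σ * t)
      = ∫ σ in (1 : ℝ)..a, ∫ t in (-r)..r, H (σ * t) := hswap
    _ ≤ ∫ _ in (1 : ℝ)..a, ∫ t in (-(a * r))..(a * r), H t :=
        intervalIntegral.integral_mono_on ha (hcont.intervalIntegrable _ _) (by simp)
          fun σ hσ ↦ integral_comp_mul_le hH hH₀ hσ.1 hr (by gcongr; exact hσ.2)
    _ = (a - 1) * ∫ t in (-(a * r))..(a * r), H t := by simp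

theorem integral_sq_comp_mul_sub_mul_le {F W : ℝ → ℝ} (hF : ContDiff ℝ 1 F) (hW : Continuous W)
    (hW₀ : ∀ t, 0 ≤ W t) {a M : ℝ} (ha : 1 ≤ a) (hr : 0 ≤ r) (hM : 0 ≤ M)
    (hWM : ∀ t σ, |t| ≤ r → σ ∈ Icc 1 a → W t ≤ M * W (σ * t)) :
    ∫ t in (-r)..r, (F (a * t) - F t) ^ 2 * W t
      ≤ ((a - 1) * r) ^ 2 * M * ∫ t in (-(a * r))..(a * r), deriv F t ^ 2 * W t := by
  let H : ℝ → ℝ := fun t ↦ deriv F t ^ 2 * W t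
  have hH : Continuous H := by fun_prop
  have pointwise : ∀ t ∈ Icc (-r) r, (F (a * t) - F t) ^ 2 * W t
      ≤ (a - 1) * r ^ 2 * M * ∫ σ in (1 : ℝ)..a, H (σ * t) := by
    intro t ht
    have htr : t ^ 2 ≤ r ^ 2 := sq_le_sq' ht.1 ht.2
    have hint : ∫ σ in (1 : ℝ)..a, deriv F (σ * t) ^ 2 * W t
        ≤ ∫ σ in (1 : ℝ)..a, M * H (σ * t) := by
      refine intervalIntegral.integral_mono_on ha (Continuous.intervalIntegrable (by fun_prop) _ _)
        (Continuous.intervalIntegrable (by fun_prop) _ _) fun σ hσ ↦ ?_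
      rw [mul_left_comm]
      gcongr
      exact hWM t σ (abs_le.2 ht) hσ
    have hnonneg : 0 ≤ ∫ σ in (1 : ℝ)..a, deriv F (σ * t) ^ 2 * W t :=
      intervalIntegral.integral_nonneg ha fun σ _ ↦ mul_nonneg (sq_nonneg _) (hW₀ t)
    calc (F (a * t) - F t) ^ 2 * W t
        ≤ ((a - 1) * t ^ 2 * ∫ σ in (1 : ℝ)..a, deriv F (σ * t) ^ 2) * W t :=
          mul_le_mul_of_nonneg_right (sq_comp_mul_sub_le hF ha t) (hW₀ t)
      _ = (a - 1) * t ^ 2 * ∫ σ in (1 : ℝ)..a, deriv F (σ * t) ^ 2 * W t := by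
          rw [intervalIntegral.integral_mul_const]
          ring
      _ ≤ (a - 1) * r ^ 2 * ∫ σ in (1 : ℝ)..a, M * H (σ * t) := by gcongr
      _ = (a - 1) * r ^ 2 * M * ∫ σ in (1 : ℝ)..a, H (σ * t) := by
          rw [intervalIntegral.integral_const_mul]
          ring
  have hcont : Continuous fun t ↦ ∫ σ in (1 : ℝ)..a, H (σ * t) :=
    intervalIntegral.continuous_parametric_intervalIntegral_of_continuous'
      (by simp only [Function.uncurry_def]; fun_prop) _ _
  calc ∫ t in (-r)..r, (F (a * t) - F t) ^ 2 * W t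
      ≤ ∫ t in (-r)..r, (a - 1) * r ^ 2 * M * ∫ σ in (1 : ℝ)..a, H (σ * t) :=
        intervalIntegral.integral_mono_on (by linarith)
          (Continuous.intervalIntegrable (by fun_prop) _ _)
          ((hcont.const_mul _).intervalIntegrable _ _) pointwise
    _ = (a - 1) * r ^ 2 * M * ∫ t in (-r)..r, ∫ σ in (1 : ℝ)..a, H (σ * t) :=
        intervalIntegral.integral_const_mul _ _
    _ ≤ (a - 1) * r ^ 2 * M * ((a - 1) * ∫ t in (-(a * r))..(a * r), H t) := by
        gcongr
        exact integral_integral_comp_mul_le hH (fun t ↦ mul_nonneg (sq_nonneg _) (hW₀ t)) ha hr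
    _ = ((a - 1) * r) ^ 2 * M * ∫ t in (-(a * r))..(a * r), H t := by ring

end Dilation

section WeightedDilation

/-- The operator `T*_{y,s}` of a Gibbs density `exp (-V)`, read in the coordinate `t = ⟨x - y⟩` and
parametrized by `η = s / (1 - s)`, so that `1 + η = (1 - s)⁻¹` and `x_η` has coordinate
`(1 + η) * t`. -/
def adjointDilation (V : ℝ → ℝ) (η : ℝ) (g : ℝ → ℝ) (t : ℝ) : ℝ :=
  (1 + η) * exp (V t - V ((1 + η) * t)) * g ((1 + η) * t)

/-- The constant in the `L²` estimate for `adjointDilation V η g - g`: `R` is the half-length of the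
interval, and `c` is `2` plus `R` times the Lipschitz constant of `V`. -/
def adjointDilationConst (R c η : ℝ) : ℝ := 2 * R ^ 2 * (R ^ 2 + c ^ 2) * η ^ 2 * exp (3 * c * η)

theorem abs_exp_sub_one_le_mul_exp_abs (v : ℝ) : |exp v - 1| ≤ |v| * exp |v| := by
  rcases le_total 0 v with hv | hv
  · rw [abs_of_nonneg hv, abs_of_nonneg (sub_nonneg.2 (one_le_exp hv))]
    have hinv : exp v * exp (-v) = 1 := by rw [← exp_add, add_neg_cancel, exp_zero]
    nlinarith [one_sub_le_exp_neg v, exp_pos v]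
  · rw [abs_of_nonpos hv, abs_of_nonpos (sub_nonpos.2 (exp_le_one_iff.2 hv))]
    nlinarith [add_one_le_exp v, one_le_exp (neg_nonneg.2 hv)]

theorem abs_sq_mul_exp_sub_one_le {η u δ : ℝ} (hη : 0 ≤ η) (hu : |u| ≤ δ) :
    |(1 + η) ^ 2 * exp u - 1| ≤ (δ + 2 * η) * exp (δ + 2 * η) := by
  have hlog : log (1 + η) ≤ η := by linarith [log_le_sub_one_of_pos (show 0 < 1 + η by linarith)]
  have hlog₀ : 0 ≤ log (1 + η) := log_nonneg (by linarith)
  have hexp : (1 + η) ^ 2 * exp u = exp (u + 2 * log (1 + η)) := by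
    rw [exp_add, mul_comm 2, exp_mul, exp_log (by linarith), rpow_two, mul_comm]
  have habs : |u + 2 * log (1 + η)| ≤ δ + 2 * η := by
    rw [abs_le] at hu ⊢
    constructor <;> linarith
  rw [hexp]
  refine (abs_exp_sub_one_le_mul_exp_abs _).trans ?_
  gcongr
  exact (abs_nonneg _).trans habs

open scoped NNReal

variable {F V : ℝ → ℝ} {K : ℝ≥0} {η R : ℝ}

theorem abs_sub_comp_mul_le (hV : LipschitzWith K V) {t σ : ℝ} (ht : |t| ≤ R)
    (hσ : σ ∈ Icc 1 (1 + η)) : |V t - V (σ * t)| ≤ K * R * η := by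
  have hdist : |t - σ * t| ≤ R * η := by
    rw [← one_sub_mul, abs_mul, abs_sub_comm, abs_of_nonneg (sub_nonneg.2 hσ.1), mul_comm]
    exact mul_le_mul ht (by linarith [hσ.2]) (sub_nonneg.2 hσ.1) ((abs_nonneg t).trans ht)
  calc |V t - V (σ * t)| ≤ K * |t - σ * t| := hV.dist_le_mul t (σ * t)
    _ ≤ K * (R * η) := by gcongr
    _ = K * R * η := by ring

theorem exp_neg_le_mul_exp_neg_comp_mul (hV : LipschitzWith K V) {t σ : ℝ} (ht : |t| ≤ R)
    (hσ : σ ∈ Icc 1 (1 + η)) : exp (-V t) ≤ exp (K * R * η) * exp (-V (σ * t)) := by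
  rw [← exp_add]
  gcongr
  linarith [(abs_le.1 (abs_sub_comp_mul_le hV ht hσ)).1]

theorem sq_adjointDilation_sub_mul_exp_le (hV : LipschitzWith K V) (hη : 0 ≤ η) {t : ℝ}
    (ht : |t| ≤ R) :
    (adjointDilation V η (fun x ↦ F x * -x) t - F t * -t) ^ 2 * exp (-V t)
      ≤ 2 * R ^ 2 * ((F ((1 + η) * t) - F t) ^ 2 * exp (-V t)
        + ((2 + K * R) * η * exp ((2 + K * R) * η)) ^ 2 * exp (K * R * η)
          * (F ((1 + η) * t) ^ 2 * exp (-V ((1 + η) * t)))) := by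
  have hmem : 1 + η ∈ Icc 1 (1 + η) := ⟨by linarith, le_rfl⟩
  have ht2 : t ^ 2 ≤ R ^ 2 := sq_le_sq' (abs_le.1 ht).1 (abs_le.1 ht).2
  set x := F ((1 + η) * t) - F t
  set e := (1 + η) ^ 2 * exp (V t - V ((1 + η) * t)) - 1
  set A := (2 + K * R) * η * exp ((2 + K * R) * η)
  have hdecomp : adjointDilation V η (fun x ↦ F x * -x) t - F t * -t
      = -t * (x + e * F ((1 + η) * t)) := by
    simp only [adjointDilation, x, e]
    ring
  have he : e ^ 2 ≤ A ^ 2 := by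
    have hle := abs_sq_mul_exp_sub_one_le hη (abs_sub_comp_mul_le hV ht hmem)
    rw [show K * R * η + 2 * η = (2 + K * R) * η by ring] at hle
    exact sq_le_sq' (abs_le.1 hle).1 (abs_le.1 hle).2
  calc (adjointDilation V η (fun x ↦ F x * -x) t - F t * -t) ^ 2 * exp (-V t)
      = t ^ 2 * (x + e * F ((1 + η) * t)) ^ 2 * exp (-V t) := by rw [hdecomp]; ring
    _ ≤ R ^ 2 * (2 * (x ^ 2 + (e * F ((1 + η) * t)) ^ 2)) * exp (-V t) := by
        gcongr
        exact add_sq_le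
    _ = 2 * R ^ 2 * (x ^ 2 * exp (-V t) + e ^ 2 * F ((1 + η) * t) ^ 2 * exp (-V t)) := by ring
    _ ≤ 2 * R ^ 2 * (x ^ 2 * exp (-V t) + A ^ 2 * F ((1 + η) * t) ^ 2
          * (exp (K * R * η) * exp (-V ((1 + η) * t)))) := by
        gcongr
        exact exp_neg_le_mul_exp_neg_comp_mul hV ht hmem
    _ = _ := by ring

theorem integral_sq_adjointDilation_sub_le_add (hF : Continuous F) (hV : LipschitzWith K V)
    (hη : 0 ≤ η) {r : ℝ} (hr : 0 ≤ r) (hrR : r ≤ R) :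
    ∫ t in (-r)..r, (adjointDilation V η (fun x ↦ F x * -x) t - F t * -t) ^ 2 * exp (-V t)
      ≤ 2 * R ^ 2 * ((∫ t in (-r)..r, (F ((1 + η) * t) - F t) ^ 2 * exp (-V t))
        + ((2 + K * R) * η * exp ((2 + K * R) * η)) ^ 2 * exp (K * R * η)
          * ∫ t in (-r)..r, F ((1 + η) * t) ^ 2 * exp (-V ((1 + η) * t))) := by
  have : Continuous V := hV.continuous
  rw [← intervalIntegral.integral_const_mul, ← intervalIntegral.integral_add
    (Continuous.intervalIntegrable (by fun_prop) _ _)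
    (Continuous.intervalIntegrable (by fun_prop) _ _), ← intervalIntegral.integral_const_mul]
  refine intervalIntegral.integral_mono_on (by linarith)
    (Continuous.intervalIntegrable (by unfold adjointDilation; fun_prop) _ _)
    (Continuous.intervalIntegrable (by fun_prop) _ _) fun t ht ↦ ?_
  exact sq_adjointDilation_sub_mul_exp_le hV hη ((abs_le.2 ht).trans hrR)

theorem integral_sq_adjointDilation_sub_le (hF : ContDiff ℝ 1 F) (hV : LipschitzWith K V)
    (hη : 0 ≤ η) {r : ℝ} (hr : 0 ≤ r) (hrR : (1 + η) * r = R) :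
    ∫ t in (-r)..r, (adjointDilation V η (fun x ↦ F x * -x) t - F t * -t) ^ 2 * exp (-V t)
      ≤ adjointDilationConst R (2 + K * R) η * ((∫ t in (-R)..R, deriv F t ^ 2 * exp (-V t))
        + ∫ t in (-R)..R, F t ^ 2 * exp (-V t)) := by
  have hFc : Continuous F := hF.continuous
  have hVc : Continuous V := hV.continuous
  have hrR' : r ≤ R := by nlinarith
  have hR : 0 ≤ R := hr.trans hrR'
  set c := 2 + K * R with hc
  set P := ∫ t in (-R)..R, deriv F t ^ 2 * exp (-V t)
  set Q := ∫ t in (-R)..R, F t ^ 2 * exp (-V t)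
  have hP : 0 ≤ P := intervalIntegral.integral_nonneg (by linarith) fun t _ ↦ by positivity
  have hQ : 0 ≤ Q := intervalIntegral.integral_nonneg (by linarith) fun t _ ↦ by positivity
  have hKRη : 0 ≤ K * R * η := by positivity
  have increment : ∫ t in (-r)..r, (F ((1 + η) * t) - F t) ^ 2 * exp (-V t)
      ≤ (η * r) ^ 2 * exp (K * R * η) * P := by
    have := integral_sq_comp_mul_sub_mul_le hF (W := fun t ↦ exp (-V t)) (by fun_prop)
      (fun t ↦ (exp_pos _).le) (by linarith) hr (exp_pos (K * R * η)).le
      fun t σ ht hσ ↦ exp_neg_le_mul_exp_neg_comp_mul hV (ht.trans hrR') hσ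
    rwa [add_sub_cancel_left, hrR] at this
  have dilated : ∫ t in (-r)..r, F ((1 + η) * t) ^ 2 * exp (-V ((1 + η) * t)) ≤ Q :=
    integral_comp_mul_le (H := fun t ↦ F t ^ 2 * exp (-V t)) (by fun_prop)
      (fun t ↦ by positivity) (by linarith) hr hrR.le
  have hexp : exp (K * R * η) ≤ exp (3 * c * η) := exp_le_exp.2 (by rw [hc]; linarith)
  have hexp_sq : (c * η * exp (c * η)) ^ 2 * exp (K * R * η) ≤ (c * η) ^ 2 * exp (3 * c * η) := by
    rw [mul_pow, mul_assoc, ← exp_nat_mul, ← exp_add]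
    gcongr
    push_cast
    linarith
  calc _ ≤ 2 * R ^ 2 * ((η * r) ^ 2 * exp (K * R * η) * P
        + (c * η * exp (c * η)) ^ 2 * exp (K * R * η) * Q) :=
        (integral_sq_adjointDilation_sub_le_add hFc hV hη hr hrR').trans (by gcongr)
    _ ≤ 2 * R ^ 2 * ((η * R) ^ 2 * exp (3 * c * η) * P + (c * η) ^ 2 * exp (3 * c * η) * Q) := by
        gcongr 2 * R ^ 2 * (?_ * ?_ * P + ?_ * Q)
        gcongr
    _ ≤ adjointDilationConst R c η * (P + Q) := by
        have : 0 ≤ 2 * R ^ 2 * η ^ 2 * exp (3 * c * η) * (c ^ 2 * P + R ^ 2 * Q) := by positivity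
        unfold adjointDilationConst
        linarith

end WeightedDilation

theorem dist_integral_dist_sq_le {X : Type*} [PseudoMetricSpace X] [MeasurableSpace X]
    [OpensMeasurableSpace X] (ν : Measure X) [IsFiniteMeasure ν] {D : ℝ}
    (hD : ∀ x y : X, dist x y ≤ D) (x x' : X) :
    dist (∫ y, dist x y ^ 2 ∂ν) (∫ y, dist x' y ^ 2 ∂ν) ≤ 2 * D * ν.real univ * dist x x' := by
  have hint : ∀ x : X, Integrable (fun y ↦ dist x y ^ 2) ν := fun x ↦
    Integrable.of_bound (by fun_prop) (D ^ 2) <| Eventually.of_forall fun y ↦ by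
      rw [norm_of_nonneg (by positivity)]
      gcongr
      exact hD x y
  have hpoint : ∀ y, ‖dist x y ^ 2 - dist x' y ^ 2‖ ≤ 2 * D * dist x x' := by
    intro y
    rw [sq_sub_sq, norm_mul, norm_of_nonneg (by positivity), two_mul]
    gcongr
    · exact add_nonneg (dist_nonneg.trans (hD x x)) (dist_nonneg.trans (hD x x))
    · exact hD x y
    · exact hD x' y
    · exact abs_dist_sub_le x x' y
  rw [dist_eq_norm, ← integral_sub (hint x) (hint x'), mul_right_comm]
  exact norm_integral_le_of_norm_le_const (Eventually.of_forall hpoint)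

section Circle

theorem dist_le_pi (x y : 𝕋) : dist x y ≤ π := by
  have := AddCircle.norm_le_half_period (2 * π) (x := x - y) two_pi_pos.ne'
  rwa [abs_of_pos two_pi_pos, mul_div_cancel_left₀ π two_ne_zero, ← dist_eq_norm] at this

theorem coe_rep (z : 𝕋) : (rep z : 𝕋) = z := AddCircle.coe_equivIoc

theorem rep_coe {t : ℝ} (ht : t ∈ Ioc (-π) π) : rep t = t :=
  AddCircle.equivIoc_coe_of_mem ⟨ht.1, by linarith [ht.2]⟩

theorem apply_rep_add_coe {α : Type*} {g : ℝ → α} (hg : Function.Periodic g (2 * π)) (y : 𝕋)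
    (t : ℝ) : g (rep (y + t)) = g (rep y + t) := by
  rw [← hg.lift_coe, ← hg.lift_coe, coe_rep, AddCircle.coe_add, coe_rep]

theorem periodic_deriv {f : ℝ → ℝ} {T : ℝ} (hf : Function.Periodic f T) :
    Function.Periodic (deriv f) T := fun x ↦ by
  rw [← deriv_comp_add_const, funext hf]

theorem add_coe_mem_ball_iff (y : 𝕋) {r t : ℝ} (ht : |t| ≤ π) :
    y + (t : 𝕋) ∈ Metric.ball y r ↔ t ∈ Ioo (-r) r := by
  have hnorm : ‖(t : 𝕋)‖ = |t| := by
    rwa [AddCircle.norm_coe_eq_abs_iff _ two_pi_pos.ne', abs_of_pos two_pi_pos,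
      mul_div_cancel_left₀ π two_ne_zero]
  rw [Metric.mem_ball, dist_eq_norm, add_sub_cancel_left, hnorm, abs_lt, mem_Ioo]

section Gibbs

variable (ν : Measure 𝕋) [IsFiniteMeasure ν]

theorem dist_U2_le (x x' : 𝕋) : dist (U2 ν x) (U2 ν x') ≤ 2 * π * ν.real univ * dist x x' :=
  dist_integral_dist_sq_le ν dist_le_pi x x'

theorem continuous_U2 : Continuous (U2 ν) := (LipschitzWith.of_dist_le' (dist_U2_le ν)).continuous

theorem lipschitzWith_mul_U2_add_coe (β : ℝ) (y : 𝕋) :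
    LipschitzWith (2 * π * |β| * ν.real univ).toNNReal fun t : ℝ ↦ β * U2 ν (y + t) := by
  refine LipschitzWith.of_dist_le' fun t t' ↦ ?_
  have hcoe : dist (y + (t : 𝕋)) (y + t') ≤ dist t t' := by
    rw [dist_add_left, dist_eq_norm, dist_eq_norm, ← AddCircle.coe_sub]
    exact QuotientAddGroup.norm_mk_le_norm
  calc dist (β * U2 ν (y + t)) (β * U2 ν (y + t')) = |β| * dist (U2 ν (y + t)) (U2 ν (y + t')) := by
        rw [Real.dist_eq, Real.dist_eq, ← mul_sub, abs_mul]
    _ ≤ |β| * (2 * π * ν.real univ * dist t t') := by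
        gcongr
        exact (dist_U2_le ν _ _).trans (by gcongr)
    _ = 2 * π * |β| * ν.real univ * dist t t' := by ring

theorem integral_gibbs2 (β : ℝ) (y : 𝕋) (G : 𝕋 → ℝ) :
    ∫ x, G x ∂gibbs2 ν β
      = (2 * π * Z2 ν β)⁻¹ * ∫ t in (-π)..π, G (y + t) * exp (-(β * U2 ν (y + t))) := by
  have : Continuous (U2 ν) := continuous_U2 ν
  have hZ : 0 ≤ Z2 ν β := integral_nonneg fun x ↦ (exp_pos _).le
  have hdensity : ∀ x, (ENNReal.ofReal (exp (-β * U2 ν x) / Z2 ν β)).toReal • G x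
      = (Z2 ν β)⁻¹ * (G x * exp (-(β * U2 ν x))) := fun x ↦ by
    rw [ENNReal.toReal_ofReal (by positivity), smul_eq_mul, neg_mul]
    ring
  unfold gibbs2 lam
  rw [integral_withDensity_eq_integral_toReal_smul
      (Continuous.measurable (by fun_prop)).ennreal_ofReal
      (Eventually.of_forall fun x ↦ ENNReal.ofReal_lt_top), integral_smul_measure,
    ← integral_add_left_eq_self _ y, ← AddCircle.intervalIntegral_preimage (2 * π) (-π),
    show -π + 2 * π = π by ring]
  simp only [hdensity]
  rw [intervalIntegral.integral_const_mul, ENNReal.toReal_inv, ENNReal.toReal_ofReal two_pi_pos.le,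
    smul_eq_mul, mul_inv (2 * π), mul_assoc]

theorem setIntegral_ball_gibbs2 (β : ℝ) (y : 𝕋) (G : 𝕋 → ℝ) {r : ℝ} (hr : 0 ≤ r) (hrπ : r ≤ π) :
    ∫ x in Metric.ball y r, G x ∂gibbs2 ν β
      = (2 * π * Z2 ν β)⁻¹ * ∫ t in (-r)..r, G (y + t) * exp (-(β * U2 ν (y + t))) := by
  rw [← integral_indicator Metric.isOpen_ball.measurableSet, integral_gibbs2 ν β y]
  congr 1
  have hinter : Ioc (-π) π ∩ Ioo (-r) r = Ioo (-r) r :=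
    inter_eq_right.2 fun t ht ↦ ⟨by linarith [ht.1], by linarith [ht.2]⟩
  rw [intervalIntegral.integral_of_le (by linarith), intervalIntegral.integral_of_le (by linarith),
    integral_Ioc_eq_integral_Ioo (x := -r), ← hinter, ← setIntegral_indicator measurableSet_Ioo]
  refine setIntegral_congr_fun measurableSet_Ioc fun t ht ↦ ?_
  have hmem := add_coe_mem_ball_iff y (r := r) (abs_le.2 ⟨ht.1.le, ht.2⟩)
  by_cases h : t ∈ Ioo (-r) r
  · simp only [indicator_of_mem (hmem.2 h), indicator_of_mem h]
  · simp only [indicator_of_notMem (mt hmem.1 h), indicator_of_notMem h, zero_mul]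

end Gibbs

theorem adjoint_sub_eq_adjointDilation_sub (U : 𝕋 → ℝ) (β : ℝ) (y : 𝕋) {f : ℝ → ℝ}
    (hf : Function.Periodic f (2 * π)) {η : ℝ} (hη : 0 ≤ η) {t : ℝ}
    (ht : |(1 + η) * t| < π) {xe : 𝕋 → 𝕋} (hxe : ∀ x, xe x = x + ((η * rep (x - y) : ℝ) : 𝕋))
    {gy : 𝕋 → ℝ} (hgy : ∀ z, gy z = f (rep z) * rep (y - z)) :
    (1 + η) * exp (β * (U (y + t) - U (xe (y + t)))) * gy (xe (y + t)) - gy (y + t)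
      = adjointDilation (fun t ↦ β * U (y + t)) η (fun x ↦ f (rep y + x) * -x) t
        - f (rep y + t) * -t := by
  have htπ : |t| < π := by
    rw [abs_mul, abs_of_nonneg (by linarith)] at ht
    nlinarith [abs_nonneg t]
  have hxet : xe (y + t) = y + ((1 + η) * t : ℝ) := by
    rw [hxe, add_sub_cancel_left, rep_coe ⟨(abs_lt.1 htπ).1, (abs_lt.1 htπ).2.le⟩, add_assoc,
      ← AddCircle.coe_add, one_add_mul]
  have hgyt : ∀ x : ℝ, |x| < π → gy (y + x) = f (rep y + x) * -x := fun x hx ↦ by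
    rw [hgy, apply_rep_add_coe hf, sub_add_cancel_left, ← AddCircle.coe_neg,
      rep_coe ⟨neg_lt_neg (abs_lt.1 hx).2, by linarith [(abs_lt.1 hx).1]⟩]
  rw [hxet, hgyt _ ht, hgyt _ htπ, adjointDilation, mul_sub]

theorem adjoint_operator_L2_estimate_p_two_general (ν : Measure 𝕋) [IsFiniteMeasure ν] (β : ℝ)
    {s : ℝ} (hs₀ : 0 ≤ s) (hs₁ : s < 1) (y : 𝕋) {f : ℝ → ℝ} (hper : Function.Periodic f (2 * π))
    (hf : ContDiff ℝ 1 f) {xe : 𝕋 → 𝕋}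
    (hxe : ∀ x, xe x = x + ((s / (1 - s) * rep (x - y) : ℝ) : 𝕋))
    {gy : 𝕋 → ℝ} (hgy : ∀ z, gy z = f (rep z) * rep (y - z)) :
    ∫ x in Metric.ball y ((1 - s) * π),
        ((1 - s)⁻¹ * exp (β * (U2 ν x - U2 ν (xe x))) * gy (xe x) - gy x) ^ 2 ∂gibbs2 ν β
      ≤ adjointDilationConst π (2 + 2 * π ^ 2 * |β| * ν.real univ) (s / (1 - s)) *
          ((∫ x, deriv f (rep x) ^ 2 ∂gibbs2 ν β) + ∫ x, f (rep x) ^ 2 ∂gibbs2 ν β) := by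
  have h1s : 0 < 1 - s := sub_pos.2 hs₁
  set η := s / (1 - s) with hη_def
  have hη : 0 ≤ η := by positivity
  have hone_add : (1 - s)⁻¹ = 1 + η := by
    rw [hη_def]
    field_simp
    ring
  have hdil : (1 + η) * ((1 - s) * π) = π := by
    rw [← hone_add, inv_mul_cancel_left₀ h1s.ne']
  have hZ : 0 ≤ Z2 ν β := integral_nonneg fun x ↦ (exp_pos _).le
  have hderiv : ∀ t, deriv f (rep y + t) = deriv (fun t ↦ f (rep y + t)) t := fun t ↦
    (deriv_comp_const_add f (rep y) t).symm
  have hconst : 2 * π ^ 2 * |β| * ν.real univ = (2 * π * |β| * ν.real univ).toNNReal * π := by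
    rw [coe_toNNReal _ (by positivity)]
    ring
  have hchart := integral_sq_adjointDilation_sub_le (F := fun t ↦ f (rep y + t))
    (by fun_prop) (lipschitzWith_mul_U2_add_coe ν β y) hη (by positivity) hdil
  rw [setIntegral_ball_gibbs2 ν β y _ (by positivity) (by nlinarith [pi_pos]),
    integral_gibbs2 ν β y, integral_gibbs2 ν β y, ← mul_add, mul_left_comm, hone_add, hconst]
  simp only [apply_rep_add_coe hper, apply_rep_add_coe (periodic_deriv hper), hderiv]
  gcongr
  refine hchart.trans_eq' <| intervalIntegral.integral_congr_Ioo_of_le (by nlinarith [pi_pos])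
    fun t ht ↦ ?_
  have ht' : |(1 + η) * t| < π := by
    rw [abs_mul, abs_of_pos (by positivity), ← hdil]
    gcongr
    exact abs_lt.2 ht
  rw [adjoint_sub_eq_adjointDilation_sub _ β y hper hη ht' hxe hgy]

theorem adjointDilationConst_pi_le {s β : ℝ} (hs : 0 ≤ s) (hβ : 1 ≤ β) (hβs : β * s ≤ 1 / 2) :
    adjointDilationConst π (2 + 2 * π ^ 2 * β) (s / (1 - s))
      ≤ 4 * adjointDilationConst π (2 + 2 * π ^ 2) 1 * s ^ 2 * β ^ 2 := by
  have hs2 : s ≤ 1 / 2 := by nlinarith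
  have hη₀ : 0 ≤ s / (1 - s) := div_nonneg hs (by linarith)
  have hη : s / (1 - s) ≤ 2 * s := by
    rw [div_le_iff₀ (by linarith)]
    nlinarith
  have hc : 2 + 2 * π ^ 2 * β ≤ (2 + 2 * π ^ 2) * β := by linarith
  have hcη : (2 + 2 * π ^ 2 * β) * (s / (1 - s)) ≤ 2 + 2 * π ^ 2 :=
    calc _ ≤ (2 + 2 * π ^ 2) * β * (2 * s) := by gcongr
      _ = (2 + 2 * π ^ 2) * (2 * (β * s)) := by ring
      _ ≤ 2 + 2 * π ^ 2 := mul_le_of_le_one_right (by positivity) (by linarith)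
  have hβ2 : 1 ≤ β ^ 2 := one_le_pow₀ hβ
  calc adjointDilationConst π (2 + 2 * π ^ 2 * β) (s / (1 - s))
      ≤ 2 * π ^ 2 * (π ^ 2 * β ^ 2 + ((2 + 2 * π ^ 2) * β) ^ 2) * (2 * s) ^ 2
          * exp (3 * (2 + 2 * π ^ 2)) := by
        unfold adjointDilationConst
        rw [mul_assoc 3]
        gcongr
        exact le_mul_of_one_le_right (sq_nonneg π) hβ2
    _ = 4 * adjointDilationConst π (2 + 2 * π ^ 2) 1 * s ^ 2 * β ^ 2 := by
        rw [adjointDilationConst, mul_one]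
        ring

end Circle

/-- Lemma `Tstarpa0`: there is a universal constant `k > 0` such that for any
probability measure `ν` on the circle, any `s > 0`, `β ≥ 1` with `βs ≤ 1/2`, any `y` and any
`C¹` function `f` on the circle, setting `η = s/(1-s)`, `g_y(z) = f(z)⟨y-z⟩` and
`x_η = x + η⟨x-y⟩`,
`∫_{B(y,(1-s)π)} ((1-s)⁻¹ e^{β(U₂(x)-U₂(x_η))} g_y(x_η) - g_y(x))² dμ_β
   ≤ k s² β² (∫ (f')² dμ_β + ∫ f² dμ_β)`. -/
theorem adjoint_operator_L2_estimate_p_two :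
    ∃ k : ℝ, 0 < k ∧
      ∀ (ν : Measure 𝕋), IsProbabilityMeasure ν →
      ∀ (s β : ℝ), 0 < s → 1 ≤ β → β * s ≤ 1 / 2 →
      ∀ (y : 𝕋) (f : ℝ → ℝ), Function.Periodic f (2 * π) → ContDiff ℝ 1 f →
      ∀ (xe : 𝕋 → 𝕋), (∀ x, xe x = x + ((s / (1 - s) * rep (x - y) : ℝ) : 𝕋)) →
      ∀ (gy : 𝕋 → ℝ), (∀ z, gy z = f (rep z) * rep (y - z)) →
        (∫ x in Metric.ball y ((1 - s) * π),
            ((1 - s)⁻¹ * Real.exp (β * (U2 ν x - U2 ν (xe x))) * gy (xe x) - gy x) ^ 2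
              ∂(gibbs2 ν β))
          ≤ k * s ^ 2 * β ^ 2 *
              ((∫ x, (deriv f (rep x)) ^ 2 ∂(gibbs2 ν β))
                + ∫ x, (f (rep x)) ^ 2 ∂(gibbs2 ν β)) := by
  refine ⟨4 * adjointDilationConst π (2 + 2 * π ^ 2) 1,
    by unfold adjointDilationConst; positivity, ?_⟩
  intro ν _ s β hs hβ hβs y f hper hf xe hxe gy hgy
  have hest := adjoint_operator_L2_estimate_p_two_general ν β hs.le (by nlinarith) y hper hf hxe hgy
  rw [probReal_univ, mul_one, abs_of_pos (by linarith)] at hest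
  exact hest.trans <| mul_le_mul_of_nonneg_right (adjointDilationConst_pi_le hs.le hβ hβs)
    (add_nonneg (integral_nonneg fun _ ↦ sq_nonneg _) (integral_nonneg fun _ ↦ sq_nonneg _))
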